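/- arXiv:2504.16602 — 2 statements merged into one kernel-verified Lean document; each statement's English description precedes it below -/
import Mathlib

section
/- Let k be a field of characteristic p > 0, let (H_n)_{n ∈ ℕ} be a family of groups, and let G = *_{n ∈ ℕ} H_n be their free product (coproduct of groups). For each n, let Ind_n = kG ⊗_{kH_n} k denote the kG-module induced from the trivial kH_n-module k along the canonical inclusion H_n → G. Then there is a short exact sequence of kG-modules 0 → P → ⊕_{n ∈ ℕ} Ind_n → k → 0, where the map ⊕_{n} Ind_n → k is given on each summand by the augmentation g ⊗ 1 ↦ 1 and where P is a projective kG-module. -/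
open TensorProduct DirectSum

noncomputable section

universe u

variable (k : Type u) [Field k] (H : ℕ → Type u) [∀ n, Group (H n)]

/-- The group algebra `kG` of the free product `G = *_{n ∈ ℕ} H_n`. -/
abbrev FreeProdAlg : Type u := MonoidAlgebra k (Monoid.CoprodI H)

/-- The ring homomorphism `kH_n →+* kG` induced by the canonical inclusion `H_n → G`. -/
def inclHom (n : ℕ) : MonoidAlgebra k (H n) →+* FreeProdAlg k H :=
  MonoidAlgebra.mapDomainRingHom k (Monoid.CoprodI.of (i := n))

/-- The trivial `kH_n`-module `k`. -/
abbrev TrivMod (n : ℕ) : Type u := (Representation.trivial k (G := H n) (V := k)).asModule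

/-- The `kG`-submodule of `kG ⊗_k k` of relations defining the balanced tensor product
`kG ⊗_{kH_n} k`. -/
def indRel (n : ℕ) : Submodule (FreeProdAlg k H) (FreeProdAlg k H ⊗[k] TrivMod k H n) :=
  Submodule.span (FreeProdAlg k H)
    { x | ∃ (a : FreeProdAlg k H) (b : MonoidAlgebra k (H n)) (v : TrivMod k H n),
        x = (a * inclHom k H n b) ⊗ₜ[k] v - a ⊗ₜ[k] (b • v) }

/-- The induced module `Ind_n = kG ⊗_{kH_n} k`, the extension of scalars along
`kH_n → kG` of the trivial `kH_n`-module `k`, realised as the balanced tensor product. -/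
abbrev Ind (n : ℕ) : Type u := (FreeProdAlg k H ⊗[k] TrivMod k H n) ⧸ indRel k H n

/-- The element `g ⊗ 1` of `Ind_n = kG ⊗_{kH_n} k`. -/
def indGen (n : ℕ) (g : Monoid.CoprodI H) : Ind k H n :=
  Submodule.Quotient.mk
    ((MonoidAlgebra.of k (Monoid.CoprodI H) g) ⊗ₜ[k]
      ((Representation.trivial k (G := H n) (V := k)).asModuleEquiv.symm 1))

/-- The trivial `kG`-module `k`. -/
abbrev TrivModG : Type u := (Representation.trivial k (G := Monoid.CoprodI H) (V := k)).asModule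

/-!
Write `e i` for the generator `1 ⊗ 1` of the `i`-th induced module. Modulo the differences
`e i - e j` all the generators coincide, and their common class is fixed by every factor, hence by
the whole free product; so these differences span the kernel of the augmentation.

Since a representation of a free product may be prescribed factor by factor, there is an extension
of the trivial module by the free module on `ι` in which the `i`-th factor fixes `(1, b i)`, with
`b` the standard basis. The homomorphism from the direct sum with `e i ↦ (1, b i)` takes `e` to an
affinely independent family, so `e` is affinely independent, and the differences `e i - e i₀` with
`i ≠ i₀` form a basis of the kernel.
-/

open scoped MonoidAlgebra

section InducedTrivial

variable (R : Type*) [CommRing R] {S G : Type*} [Monoid S] [Monoid G]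
  {N : Type*} [AddCommGroup N] [Module R[G] N]

/-- `(N, e)` is a model of the induced module `RG ⊗_{RS} R` with `e = 1 ⊗ 1`, expressed by the
presentation of that module: one generator `e` and the relations `φ s • e = e` for `s : S`. -/
structure IsInducedTrivial (φ : S →* G) (e : N) : Prop where
  span_eq_top : Submodule.span R[G] {e} = ⊤
  ker_toSpanSingleton : LinearMap.ker (LinearMap.toSpanSingleton R[G] N e) =
    Ideal.span (Set.range fun s => MonoidAlgebra.of R G (φ s) - 1)

variable {R} {φ : S →* G} {e : N}

namespace IsInducedTrivial

lemma of_smul_eq (he : IsInducedTrivial R φ e) (s : S) :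
    MonoidAlgebra.of R G (φ s) • e = e := by
  have hs : MonoidAlgebra.of R G (φ s) - 1 ∈ LinearMap.ker (LinearMap.toSpanSingleton R[G] N e) :=
    he.ker_toSpanSingleton ▸ Ideal.subset_span ⟨s, rfl⟩
  simpa only [LinearMap.mem_ker, LinearMap.toSpanSingleton_apply, sub_smul, one_smul,
    sub_eq_zero] using hs

lemma exists_linearMap (he : IsInducedTrivial R φ e) {V : Type*} [AddCommGroup V]
    [Module R[G] V] {v : V} (hv : ∀ s, MonoidAlgebra.of R G (φ s) • v = v) :
    ∃ f : N →ₗ[R[G]] V, f e = v := by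
  let toN := LinearMap.toSpanSingleton R[G] N e
  have toN_surjective : Function.Surjective toN := by
    rw [← LinearMap.range_eq_top, LinearMap.range_toSpanSingleton, he.span_eq_top]
  have ker_le : LinearMap.ker toN ≤ LinearMap.ker (LinearMap.toSpanSingleton R[G] V v) := by
    rw [he.ker_toSpanSingleton, Ideal.span_le]
    rintro _ ⟨s, rfl⟩
    simp only [SetLike.mem_coe, LinearMap.mem_ker, LinearMap.toSpanSingleton_apply, sub_smul,
      one_smul, hv, sub_self]
  refine ⟨(LinearMap.ker toN).liftQ _ ker_le ∘ₗ
    (toN.quotKerEquivOfSurjective toN_surjective).symm, ?_⟩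
  have mk_one : (toN.quotKerEquivOfSurjective toN_surjective).symm e =
      (LinearMap.ker toN).mkQ 1 := by
    rw [LinearEquiv.symm_apply_eq]
    exact (one_smul _ e).symm
  rw [LinearMap.comp_apply, LinearEquiv.coe_coe, mk_one, Submodule.mkQ_apply,
    Submodule.liftQ_apply, LinearMap.toSpanSingleton_apply, one_smul]

end IsInducedTrivial

end InducedTrivial

section Trivial

variable {R S G : Type*} [CommRing R] [Monoid S] [Monoid G]

lemma mapDomainRingHom_sub_algebraMap_mem_span (φ : S →* G) (b : R[S]) :
    MonoidAlgebra.mapDomainRingHom R φ b -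
        algebraMap R _ ((Representation.trivial R S R).asAlgebraHom b 1) ∈
      Ideal.span (Set.range fun s => MonoidAlgebra.of R G (φ s) - 1) := by
  induction b using MonoidAlgebra.induction_linear with
  | zero => simp
  | add x y hx hy =>
    rw [map_add, map_add, LinearMap.add_apply, map_add, add_sub_add_comm]
    exact add_mem hx hy
  | single s r =>
    have factor : MonoidAlgebra.mapDomainRingHom R φ (MonoidAlgebra.single s r) -
        algebraMap R _ ((Representation.trivial R S R).asAlgebraHom (MonoidAlgebra.single s r) 1) =
          algebraMap R _ r * (MonoidAlgebra.of R G (φ s) - 1) := by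
      simp [mul_sub]
    rw [factor]
    exact Ideal.mul_mem_left _ _ (Ideal.subset_span ⟨s, rfl⟩)

lemma isInducedTrivial_id_trivial :
    IsInducedTrivial R (MonoidHom.id G) ((Representation.trivial R G R).asModuleEquiv.symm 1) where
  span_eq_top := by
    rw [Submodule.eq_top_iff']
    intro v
    refine Submodule.mem_span_singleton.mpr
      ⟨algebraMap R _ ((Representation.trivial R G R).asModuleEquiv v), ?_⟩
    rw [← Representation.asModuleEquiv_symm_map_smul, smul_eq_mul, mul_one,
      LinearEquiv.symm_apply_apply]
  ker_toSpanSingleton := by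
    apply le_antisymm
    · intro a ha
      have aug_eq_zero : (Representation.trivial R G R).asAlgebraHom a 1 = 0 := ha
      simpa [aug_eq_zero] using mapDomainRingHom_sub_algebraMap_mem_span (MonoidHom.id G) a
    · rw [Ideal.span_le]
      rintro _ ⟨g, rfl⟩
      rw [SetLike.mem_coe, LinearMap.mem_ker, LinearMap.toSpanSingleton_apply, sub_smul, one_smul,
        ← Representation.asModuleEquiv_symm_map_rho, Representation.trivial_apply, sub_self]

end Trivial

section DirectSum

variable {R : Type*} [CommRing R] {G : Type*} [Monoid G] {ι : Type*} [DecidableEq ι]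
  {S : ι → Type*} [∀ i, Monoid (S i)] {φ : ∀ i, S i →* G} {N : ι → Type*}
  [∀ i, AddCommGroup (N i)] [∀ i, Module R[G] (N i)] {e : ∀ i, N i}

lemma IsInducedTrivial.span_range_lof_eq_top (he : ∀ i, IsInducedTrivial R (φ i) (e i)) :
    Submodule.span R[G] (Set.range fun i => DirectSum.lof R[G] ι N i (e i)) = ⊤ := by
  rw [eq_top_iff, ← DFinsupp.iSup_range_lsingle, iSup_le_iff]
  intro i
  rw [LinearMap.range_eq_map, ← (he i).span_eq_top, Submodule.map_span, Set.image_singleton]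
  exact Submodule.span_mono (Set.singleton_subset_iff.mpr ⟨i, rfl⟩)

lemma IsInducedTrivial.exists_linearMap_directSum (he : ∀ i, IsInducedTrivial R (φ i) (e i))
    {V : Type*} [AddCommGroup V] [Module R[G] V] {v : ι → V}
    (hv : ∀ i s, MonoidAlgebra.of R G (φ i s) • v i = v i) :
    ∃ f : (⨁ i, N i) →ₗ[R[G]] V, ∀ i, f (DirectSum.lof R[G] ι N i (e i)) = v i := by
  choose f hf using fun i => (he i).exists_linearMap (hv i)
  exact ⟨DirectSum.toModule _ _ _ f, fun i => by rw [DirectSum.toModule_lof, hf]⟩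

end DirectSum

lemma free_vectorSpan_of_affineIndependent {A V P ι : Type*} [Ring A] [AddCommGroup V]
    [Module A V] [AddTorsor V P] {e : ι → P} (he : AffineIndependent A e) :
    Module.Free A (vectorSpan A (Set.range e)) := by
  rcases isEmpty_or_nonempty ι with _ | ⟨⟨i₀⟩⟩
  · rw [Set.range_eq_empty, vectorSpan_empty]
    infer_instance
  · rw [vectorSpan_range_eq_span_range_vsub_right_ne A e i₀]
    exact .of_basis (.span ((affineIndependent_iff_linearIndependent_vsub A e i₀).mp he))

section FreeProduct

open Monoid

section AffineExtension

variable (R : Type*) [CommRing R] {ι : Type*} (M : ι → Type*) [∀ i, Monoid (M i)]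
  {F : Type*} [AddCommGroup F] [Module R F] [Module R[CoprodI M] F]
  [IsScalarTower R R[CoprodI M] F]

/-- The extension of the trivial representation `R` by `F` attached to a family `f` in `F`: the
representation of the free product on `R × F` for which `M i` acts as it does on the direct sum of
representations, conjugated by the shear `(c, x) ↦ (c, x + c • f i)`, so that it fixes
`(1, f i)`. -/
def affineExtension (f : ι → F) : Representation R (CoprodI M) (R × F) :=
  CoprodI.lift fun i =>
    (((LinearEquiv.refl R R).skewProd (LinearEquiv.refl R F)
      (LinearMap.toSpanSingleton R F (f i))).conjAlgEquiv R :
        Module.End R (R × F) →* Module.End R (R × F)).comp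
      (((Representation.trivial R (CoprodI M) R).prod (Representation.ofModule' F)).comp
        CoprodI.of)

variable {M} (f : ι → F)

lemma affineExtension_of {i : ι} (m : M i) (c : R) (x : F) :
    affineExtension R M f (CoprodI.of m) (c, x) =
      (c, MonoidAlgebra.of R _ (CoprodI.of m) • (x - c • f i) + c • f i) := by
  simp [affineExtension, Representation.ofModule']

lemma affineExtension_of_apply_self {i : ι} (m : M i) :
    affineExtension R M f (CoprodI.of m) (1, f i) = (1, f i) := by
  rw [affineExtension_of, one_smul, sub_self, smul_zero, zero_add]

lemma affineExtension_apply_zero (g : CoprodI M) (x : F) :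
    affineExtension R M f g (0, x) = (0, MonoidAlgebra.of R _ g • x) := by
  induction g using CoprodI.induction_on generalizing x with
  | one => simp only [map_one, Module.End.one_apply, one_smul]
  | of i m => simp only [affineExtension_of, zero_smul, sub_zero, add_zero]
  | mul a b ha hb => simp only [map_mul, Module.End.mul_apply, hb, ha, mul_smul]

variable (M)

/-- The inclusion of the submodule `F` into the module `affineExtension R M f`. -/
def affineExtensionInr : F →ₗ[R[CoprodI M]] (affineExtension R M f).asModule :=
  MonoidAlgebra.equivariantOfLinearOfComm
    ((affineExtension R M f).asModuleEquiv.symm.toLinearMap ∘ₗ LinearMap.inr R R F) fun g x => by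
      rw [← MonoidAlgebra.of_apply, LinearMap.comp_apply, LinearMap.comp_apply,
        LinearEquiv.coe_coe, LinearMap.inr_apply, ← affineExtension_apply_zero,
        Representation.asModuleEquiv_symm_map_rho, LinearMap.inr_apply]

lemma affineExtensionInr_injective : Function.Injective (affineExtensionInr R M f) :=
  (affineExtension R M f).asModuleEquiv.symm.injective.comp LinearMap.inr_injective

variable {f}

lemma affineIndependent_affineExtension (hf : LinearIndependent R[CoprodI M] f) :
    AffineIndependent R[CoprodI M] fun i =>
      (affineExtension R M f).asModuleEquiv.symm (1, f i) := by
  let inrAddOne := (affineExtensionInr R M f).toAffineMap +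
    AffineMap.const _ F ((affineExtension R M f).asModuleEquiv.symm (1, 0))
  have inrAddOne_injective : Function.Injective inrAddOne :=
    (add_left_injective _).comp (affineExtensionInr_injective R M f)
  convert hf.affineIndependent.map' inrAddOne inrAddOne_injective using 2 with i
  change _ = (affineExtension R M f).asModuleEquiv.symm (0, f i) +
    (affineExtension R M f).asModuleEquiv.symm (1, 0)
  rw [← map_add, Prod.mk_add_mk, zero_add, add_zero]

lemma affineIndependent_of_linearMap_affineExtension
    (hf : LinearIndependent R[CoprodI M] f) {N : Type*} [AddCommGroup N]
    [Module R[CoprodI M] N] {e : ι → N}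
    (Φ : N →ₗ[R[CoprodI M]] (affineExtension R M f).asModule)
    (hΦ : ∀ i, Φ (e i) = (affineExtension R M f).asModuleEquiv.symm (1, f i)) :
    AffineIndependent R[CoprodI M] e := by
  apply AffineIndependent.of_comp Φ.toAffineMap
  convert affineIndependent_affineExtension R M hf using 2 with i
  exact hΦ i

end AffineExtension

section Kernel

variable {R : Type*} [CommRing R] {ι : Type*} {M : ι → Type*} [∀ i, Monoid (M i)]
  {N : Type*} [AddCommGroup N] [Module R[CoprodI M] N] {e : ι → N}

lemma of_smul_sub_mem_vectorSpan
    (he : ∀ i (m : M i), MonoidAlgebra.of R _ (CoprodI.of m) • e i = e i)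
    (g : CoprodI M) (i : ι) :
    MonoidAlgebra.of R _ g • e i - e i ∈ vectorSpan R[CoprodI M] (Set.range e) := by
  have sub_mem (j l) : e j - e l ∈ vectorSpan R[CoprodI M] (Set.range e) :=
    vsub_mem_vectorSpan _ ⟨j, rfl⟩ ⟨l, rfl⟩
  induction g using CoprodI.induction_on with
  | one => simp only [map_one, one_smul, sub_self, zero_mem]
  | of j m =>
    have through_fixed : MonoidAlgebra.of R _ (CoprodI.of m) • e i - e i =
        MonoidAlgebra.of R _ (CoprodI.of m) • (e i - e j) + (e j - e i) := by
      rw [smul_sub, he, sub_add_sub_cancel]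
    rw [through_fixed]
    exact add_mem (Submodule.smul_mem _ _ (sub_mem i j)) (sub_mem j i)
  | mul a b ha hb =>
    have cocycle : MonoidAlgebra.of R _ (a * b) • e i - e i =
        MonoidAlgebra.of R _ a • (MonoidAlgebra.of R _ b • e i - e i) +
          (MonoidAlgebra.of R _ a • e i - e i) := by
      rw [map_mul, mul_smul, smul_sub, sub_add_sub_cancel]
    rw [cocycle]
    exact add_mem (Submodule.smul_mem _ _ hb) ha

lemma ker_augmentation_eq_vectorSpan
    (he : ∀ i (m : M i), MonoidAlgebra.of R _ (CoprodI.of m) • e i = e i)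
    (hspan : Submodule.span R[CoprodI M] (Set.range e) = ⊤)
    {π : N →ₗ[R[CoprodI M]] (Representation.trivial R (CoprodI M) R).asModule}
    (hπ : ∀ i, π (e i) = (Representation.trivial R (CoprodI M) R).asModuleEquiv.symm 1) :
    LinearMap.ker π = vectorSpan R[CoprodI M] (Set.range e) := by
  apply le_antisymm
  · rcases isEmpty_or_nonempty ι with _ | ⟨⟨i₀⟩⟩
    · rw [Set.range_eq_empty, Submodule.span_empty] at hspan
      exact (le_top.trans_eq hspan.symm).trans bot_le
    let q := (vectorSpan R[CoprodI M] (Set.range e)).mkQ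
    have q_fixed (g : CoprodI M) : MonoidAlgebra.of R _ g • q (e i₀) = q (e i₀) := by
      rw [← map_smul, ← sub_eq_zero, ← map_sub, Submodule.mkQ_apply, Submodule.Quotient.mk_eq_zero]
      exact of_smul_sub_mem_vectorSpan he g i₀
    obtain ⟨σ, hσ⟩ := isInducedTrivial_id_trivial.exists_linearMap q_fixed
    have factor : σ ∘ₗ π = q := by
      refine LinearMap.ext_on_range hspan fun i => ?_
      rw [LinearMap.comp_apply, hπ, hσ, ← sub_eq_zero, ← map_sub, Submodule.mkQ_apply,
        Submodule.Quotient.mk_eq_zero]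
      exact vsub_mem_vectorSpan _ ⟨i₀, rfl⟩ ⟨i, rfl⟩
    calc LinearMap.ker π ≤ LinearMap.ker (σ ∘ₗ π) := LinearMap.ker_le_ker_comp π σ
      _ = vectorSpan _ (Set.range e) := by rw [factor, Submodule.ker_mkQ]
  · rw [vectorSpan_def, Submodule.span_le]
    rintro _ ⟨_, ⟨i, rfl⟩, _, ⟨j, rfl⟩, rfl⟩
    simp only [vsub_eq_sub, SetLike.mem_coe, LinearMap.mem_ker, map_sub, hπ, sub_self]

end Kernel

section DirectSumInduced

variable {R : Type*} [CommRing R] {ι : Type*} [DecidableEq ι] {M : ι → Type*}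
  [∀ i, Monoid (M i)] {N : ι → Type*} [∀ i, AddCommGroup (N i)]
  [∀ i, Module R[CoprodI M] (N i)] {e : ∀ i, N i}

lemma IsInducedTrivial.affineIndependent_lof
    (he : ∀ i, IsInducedTrivial R (CoprodI.of : M i →* CoprodI M) (e i)) :
    AffineIndependent R[CoprodI M] fun i => DirectSum.lof R[CoprodI M] ι N i (e i) := by
  let f (i : ι) : ι →₀ R[CoprodI M] := Finsupp.single i 1
  obtain ⟨Φ, hΦ⟩ := IsInducedTrivial.exists_linearMap_directSum he
    (v := fun i => (affineExtension R M f).asModuleEquiv.symm (1, f i)) fun i m => by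
      rw [← Representation.asModuleEquiv_symm_map_rho, affineExtension_of_apply_self]
  exact affineIndependent_of_linearMap_affineExtension R M
    (Finsupp.linearIndependent_single_one _ ι) Φ hΦ

theorem exists_augmentation_surjective_projective_kernel_general [Nonempty ι]
    (he : ∀ i, IsInducedTrivial R (CoprodI.of : M i →* CoprodI M) (e i)) :
    ∃ π : (⨁ i, N i) →ₗ[R[CoprodI M]] (Representation.trivial R (CoprodI M) R).asModule,
      (∀ i (g : CoprodI M), π (DirectSum.of N i (MonoidAlgebra.of R _ g • e i)) =
        (Representation.trivial R (CoprodI M) R).asModuleEquiv.symm 1) ∧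
      Function.Surjective π ∧ Module.Free R[CoprodI M] (LinearMap.ker π) := by
  let one := (Representation.trivial R (CoprodI M) R).asModuleEquiv.symm 1
  have one_fixed (g : CoprodI M) : MonoidAlgebra.of R _ g • one = one :=
    isInducedTrivial_id_trivial.of_smul_eq g
  obtain ⟨π, hπ⟩ := IsInducedTrivial.exists_linearMap_directSum he fun i m => one_fixed (.of m)
  refine ⟨π, fun i g => ?_, ?_, ?_⟩
  · rw [← DirectSum.lof_eq_of R[CoprodI M], map_smul, map_smul, hπ, one_fixed]
  · rw [← LinearMap.range_eq_top, eq_top_iff, ← isInducedTrivial_id_trivial.span_eq_top,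
      Submodule.span_singleton_le_iff_mem]
    exact ⟨_, hπ (Classical.arbitrary ι)⟩
  · have lof_fixed (i) (m : M i) : MonoidAlgebra.of R _ (CoprodI.of m) •
        DirectSum.lof R[CoprodI M] ι N i (e i) = DirectSum.lof R[CoprodI M] ι N i (e i) := by
      rw [← map_smul, (he i).of_smul_eq]
    rw [ker_augmentation_eq_vectorSpan lof_fixed (IsInducedTrivial.span_range_lof_eq_top he) hπ]
    exact free_vectorSpan_of_affineIndependent (IsInducedTrivial.affineIndependent_lof he)

end DirectSumInduced

end FreeProduct

/-- The identification of the unbalanced tensor product `kG ⊗_k k` with `kG`. -/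
def tensorTrivEquiv (n : ℕ) :
    FreeProdAlg k H ⊗[k] TrivMod k H n ≃ₗ[FreeProdAlg k H] FreeProdAlg k H :=
  TensorProduct.AlgebraTensorModule.congr (.refl _ _)
      (Representation.trivial k (H n) k).asModuleEquiv ≪≫ₗ
    TensorProduct.AlgebraTensorModule.rid k _ _

lemma tensorTrivEquiv_tmul (n : ℕ) (a : FreeProdAlg k H) (v : TrivMod k H n) :
    tensorTrivEquiv k H n (a ⊗ₜ v) = (Representation.trivial k (H n) k).asModuleEquiv v • a := rfl

lemma smul_indGen_one (n : ℕ) (a : FreeProdAlg k H) :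
    a • indGen k H n 1 = Submodule.Quotient.mk ((tensorTrivEquiv k H n).symm a) := by
  rw [indGen, ← Submodule.Quotient.mk_smul, TensorProduct.smul_tmul', smul_eq_mul,
    map_one (MonoidAlgebra.of k _), mul_one]
  rfl

lemma of_smul_indGen_one (n : ℕ) (g : Monoid.CoprodI H) :
    MonoidAlgebra.of k _ g • indGen k H n 1 = indGen k H n g :=
  smul_indGen_one k H n _

lemma map_indRel_le_span (n : ℕ) :
    (indRel k H n).map (tensorTrivEquiv k H n).toLinearMap ≤
      Ideal.span (Set.range fun h : H n =>
        MonoidAlgebra.of k (Monoid.CoprodI H) (Monoid.CoprodI.of h) - 1) := by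
  rw [Submodule.map_le_iff_le_comap, indRel, Submodule.span_le]
  rintro _ ⟨a, b, v, rfl⟩
  let c := (Representation.trivial k (H n) k).asModuleEquiv v
  let ε := (Representation.trivial k (H n) k).asAlgebraHom b 1
  have smul_v : (Representation.trivial k (H n) k).asModuleEquiv (b • v) = c * ε := by
    rw [Representation.asModuleEquiv_map_smul, ← smul_eq_mul, ← map_smul, smul_eq_mul, mul_one]
  have image_eq : tensorTrivEquiv k H n ((a * inclHom k H n b) ⊗ₜ[k] v - a ⊗ₜ[k] (b • v)) =
      (c • a) * (inclHom k H n b - algebraMap k _ ε) := by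
    rw [map_sub, tensorTrivEquiv_tmul, tensorTrivEquiv_tmul, smul_v, mul_sub, ← Algebra.commutes,
      ← Algebra.smul_def, smul_smul, mul_comm ε, smul_mul_assoc]
  rw [SetLike.mem_coe, Submodule.mem_comap, LinearEquiv.coe_coe, image_eq]
  exact Ideal.mul_mem_left _ _ (mapDomainRingHom_sub_algebraMap_mem_span Monoid.CoprodI.of b)

lemma indGen_of (n : ℕ) (h : H n) : indGen k H n (Monoid.CoprodI.of h) = indGen k H n 1 := by
  rw [indGen, indGen, Submodule.Quotient.eq]
  refine Submodule.subset_span ⟨1, MonoidAlgebra.of k _ h,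
    (Representation.trivial k (H n) k).asModuleEquiv.symm 1, ?_⟩
  rw [← Representation.asModuleEquiv_symm_map_rho, Representation.trivial_apply, one_mul,
    map_one (MonoidAlgebra.of k _), inclHom, MonoidAlgebra.of_apply, MonoidAlgebra.of_apply,
    MonoidAlgebra.mapDomainRingHom_apply, MonoidAlgebra.mapDomain_single]

lemma isInducedTrivial_indGen_one (n : ℕ) :
    IsInducedTrivial k (Monoid.CoprodI.of : H n →* Monoid.CoprodI H) (indGen k H n 1) where
  span_eq_top := by
    rw [Submodule.eq_top_iff']
    intro y
    obtain ⟨x, rfl⟩ := Submodule.Quotient.mk_surjective _ y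
    obtain ⟨a, rfl⟩ := (tensorTrivEquiv k H n).symm.surjective x
    exact Submodule.mem_span_singleton.mpr ⟨a, smul_indGen_one k H n a⟩
  ker_toSpanSingleton := by
    apply le_antisymm
    · intro a ha
      rw [LinearMap.mem_ker, LinearMap.toSpanSingleton_apply, smul_indGen_one,
        Submodule.Quotient.mk_eq_zero] at ha
      exact map_indRel_le_span k H n ⟨_, ha, (tensorTrivEquiv k H n).apply_symm_apply a⟩
    · rw [Ideal.span_le]
      rintro _ ⟨h, rfl⟩
      rw [SetLike.mem_coe, LinearMap.mem_ker, LinearMap.toSpanSingleton_apply, sub_smul, one_smul,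
        of_smul_indGen_one, indGen_of, sub_self]

/-- Let `k` be a field of characteristic `p > 0`, `(H_n)` a family of groups and
`G = *_{n ∈ ℕ} H_n` their free product.  Then there is a short exact sequence of
`kG`-modules `0 → P → ⊕_n Ind_n → k → 0`, where the map `⊕_n Ind_n → k` is given on each
summand by the augmentation `g ⊗ 1 ↦ 1` and `P` (its kernel) is a projective `kG`-module. -/
theorem exists_augmentation_surjective_projective_kernel
    (p : ℕ) (hp : 0 < p) [CharP k p] :
    ∃ π : (⨁ n, Ind k H n) →ₗ[FreeProdAlg k H] TrivModG k H,
      (∀ (n : ℕ) (g : Monoid.CoprodI H),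
        π (DirectSum.of (fun n => Ind k H n) n (indGen k H n g)) =
          (Representation.trivial k (G := Monoid.CoprodI H) (V := k)).asModuleEquiv.symm 1) ∧
      Function.Surjective π ∧
      Module.Projective (FreeProdAlg k H) (LinearMap.ker π) := by
  obtain ⟨π, hπ, π_surjective, _⟩ :=
    exists_augmentation_surjective_projective_kernel_general (isInducedTrivial_indGen_one k H)
  exact ⟨π, fun n g => of_smul_indGen_one k H n g ▸ hπ n g, π_surjective, inferInstance⟩
end
end

section
/- Let p be a prime, k a field of characteristic p, and H a cyclic group of order p. Let M be a finite-dimensional k-linear representation of H that is not projective as a kH-module, let M^∨ be its dual representation, and let η : k → M ⊗ M^∨ be the coevaluation morphism of representations (sending 1 to the identity element of M ⊗ M^∨ ≅ End_k(M)). Then η is a split monomorphism in the stable module category: there exists a morphism of representations r : M ⊗ M^∨ → k such that the endomorphism id_k − r ∘ η of the trivial representation factors through a projective kH-module. -/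
open TensorProduct

noncomputable section

universe u

/-- The coevaluation element of a finite-dimensional vector space `M`: the element of
`M ⊗ M^∨` corresponding to the identity endomorphism under `M ⊗ M^∨ ≅ End_k M`. -/
def coevElem (k M : Type*) [Field k] [AddCommGroup M] [Module k M] [FiniteDimensional k M] :
    M ⊗[k] Module.Dual k M :=
  TensorProduct.comm k (Module.Dual k M) M ((dualTensorHomEquiv k M M).symm LinearMap.id)

/-- The coevaluation morphism `η : k ⟶ M ⊗ M^∨`, sending `1` to the identity element of
`M ⊗ M^∨ ≅ End_k M`. -/
def coevMap (k M : Type*) [Field k] [AddCommGroup M] [Module k M] [FiniteDimensional k M] :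
    k →ₗ[k] M ⊗[k] Module.Dual k M :=
  LinearMap.toSpanSingleton k _ (coevElem k M)

/-!
Identify `M ⊗ M^∨` with `End k M`, on which `H` acts by conjugation, so that `η 1` becomes the
identity. An invariant functional that does not vanish on `η 1` exists unless `η 1` dies in the
coinvariants, that is (with `g` a generator of `H`) unless `g θ g⁻¹ = θ + 1` for some `θ`. In that
case the trace over `H` of `-θ ^ (p - 1)` is `-∑ c : 𝔽_p, (θ + c) ^ (p - 1) = 1`, so `M` is
projective by Higman's criterion. Hence for non-projective `M` the coevaluation is split already
as a morphism of representations.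
-/

section PowerSum

variable (K : Type*) [Field K] [Fintype K]

theorem sum_pow_card_sub_one : ∑ c : K, c ^ (Fintype.card K - 1) = -1 := by
  classical
  have hq : Fintype.card K - 1 ≠ 0 := Nat.sub_ne_zero_of_lt Fintype.one_lt_card
  rw [Fintype.sum_eq_add_sum_subtype_ne _ (0 : K), zero_pow hq, zero_add,
    Finset.sum_congr rfl fun c _ => FiniteField.pow_card_sub_one_eq_one c.1 c.2]
  simp [Fintype.card_subtype_compl, Nat.cast_sub Fintype.card_pos]

theorem sum_add_algebraMap_pow_card_sub_one {E : Type*} [Ring E] [Algebra K E] (a : E) :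
    ∑ c : K, (a + algebraMap K E c) ^ (Fintype.card K - 1) = -1 := by
  set n := Fintype.card K - 1 with hn
  have expand (c : K) : (a + algebraMap K E c) ^ n =
      ∑ m ∈ Finset.range (n + 1), a ^ m * algebraMap K E (c ^ (n - m)) * (n.choose m : E) := by
    have hcomm : Commute a (algebraMap K E c) := (Algebra.commutes c a).symm
    simp only [hcomm.add_pow, map_pow]
  simp only [expand]
  rw [Finset.sum_comm]
  simp only [← Finset.sum_mul, ← Finset.mul_sum, ← map_sum]
  rw [Finset.sum_eq_single_of_mem 0 (by simp)]
  · simp [hn, sum_pow_card_sub_one]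
  · intro m hm hm0
    rw [Finset.mem_range] at hm
    rw [FiniteField.sum_pow_lt_card_sub_one K (n - m) (by lia), map_zero, mul_zero, zero_mul]

end PowerSum

section Representation

open Representation

section Semiring

variable {k G V : Type*} [CommSemiring k] [AddCommMonoid V] [Module k V]

theorem apply_pow_of_apply_eq_add [Monoid G]
    (σ : Representation k G V) {g : G} {v w : V} (hv : σ g v = v + w) (hw : σ g w = w) (n : ℕ) :
    σ (g ^ n) v = v + n • w := by
  induction n with
  | zero => simp
  | succ n ih =>
    rw [pow_succ', map_mul, Module.End.mul_apply, ih, map_add, map_nsmul, hv, hw, succ_nsmul']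
    abel

variable [Group G] (ρ : Representation k G V)

theorem linHom_one (g : G) : linHom ρ ρ g 1 = 1 := by
  rw [linHom_apply, Module.End.one_eq_id, LinearMap.id_comp, ← Module.End.mul_eq_comp, ← map_mul,
    mul_inv_cancel, map_one, Module.End.one_eq_id]

theorem linHom_mul (g : G) (φ ψ : Module.End k V) :
    linHom ρ ρ g (φ * ψ) = linHom ρ ρ g φ * linHom ρ ρ g ψ := by
  ext v
  simp

theorem linHom_pow (g : G) (φ : Module.End k V) (n : ℕ) :
    linHom ρ ρ g (φ ^ n) = linHom ρ ρ g φ ^ n := by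
  induction n with
  | zero => rw [pow_zero, pow_zero, linHom_one]
  | succ n ih => rw [pow_succ, pow_succ, linHom_mul, ih]

end Semiring

variable {k G V W : Type*} [AddCommGroup V] [AddCommGroup W]

theorem projective_asModule_of_subsingleton [CommSemiring k] [Monoid G] [Module k V]
    [Subsingleton V] (σ : Representation k G V) :
    Module.Projective (MonoidAlgebra k G) σ.asModule :=
  have : Subsingleton σ.asModule := ‹Subsingleton V›
  inferInstance

theorem map_mem_coinvariantsKer [CommRing k] [Monoid G] [Module k V] [Module k W]
    {σ : Representation k G V} {τ : Representation k G W} (f : σ.IntertwiningMap τ) {v : V}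
    (hv : v ∈ Coinvariants.ker σ) : f v ∈ Coinvariants.ker τ := by
  rw [← Coinvariants.mk_eq_zero] at hv ⊢
  rw [← Coinvariants.map_mk, hv, map_zero]

theorem exists_invariant_functional_eq_one [Field k] [Monoid G] [Module k V]
    {σ : Representation k G V} {v : V} (hv : v ∉ Coinvariants.ker σ) :
    ∃ f : V →ₗ[k] k, (∀ g, f ∘ₗ σ g = f) ∧ f v = 1 := by
  obtain ⟨φ, hφ⟩ := Module.Projective.exists_dual_eq_one k (mt (Coinvariants.mk_eq_zero σ).1 hv)
  exact ⟨φ ∘ₗ Coinvariants.mk σ, fun g => by ext; simp, hφ⟩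

variable [CommRing k] [Group G] [Module k V] (ρ : Representation k G V)

/-- One direction of **Higman's criterion**. -/
theorem projective_of_one_mem_range_norm_linHom [Fintype G] [Module.Projective k V]
    (h : (1 : Module.End k V) ∈ LinearMap.range (linHom ρ ρ).norm) :
    Module.Projective (MonoidAlgebra k G) ρ.asModule := by
  obtain ⟨ψ, hψ⟩ := h
  let π : (ρ.asModule →₀ MonoidAlgebra k G) →ₗ[MonoidAlgebra k G] ρ.asModule :=
    Finsupp.linearCombination _ id
  have : Module.Projective k ρ.asModule := ‹Module.Projective k V›
  obtain ⟨s, hs⟩ := (π.restrictScalars k).exists_rightInverse_of_surjective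
    (LinearMap.range_eq_top.2 (Finsupp.linearCombination_id_surjective _ _))
  have hπs (x : ρ.asModule) : π (s x) = x := LinearMap.congr_fun hs x
  let ψ' : ρ.asModule →ₗ[k] ρ.asModule := ρ.asModuleEquiv.symm.conj ψ
  refine Module.Projective.of_split ((s ∘ₗ ψ').sumOfConjugatesEquivariant G) π ?_
  have conj_apply (x : G) (v : ρ.asModule) :
      ρ.asModuleEquiv (π ((s ∘ₗ ψ').conjugate x v)) =
        ρ x⁻¹ (ψ (ρ x (ρ.asModuleEquiv v))) := by
    have hψ' (y : ρ.asModule) : ρ.asModuleEquiv (ψ' y) = ψ (ρ.asModuleEquiv y) := rfl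
    rw [LinearMap.conjugate_apply, map_smul, LinearMap.comp_apply, hπs, asModuleEquiv_map_smul,
      asAlgebraHom_single_one, hψ', asModuleEquiv_map_smul, asAlgebraHom_single_one]
  ext v
  apply ρ.asModuleEquiv.injective
  calc ρ.asModuleEquiv (π ((s ∘ₗ ψ').sumOfConjugatesEquivariant G v))
      = ∑ x : G, ρ x⁻¹ (ψ (ρ x (ρ.asModuleEquiv v))) := by
        simp only [LinearMap.sumOfConjugatesEquivariant_apply, map_sum, conj_apply]
    _ = (linHom ρ ρ).norm ψ (ρ.asModuleEquiv v) := by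
        rw [← Equiv.sum_comp (Equiv.inv G)]
        simp [Representation.norm, LinearMap.sum_apply]
    _ = ρ.asModuleEquiv v := by rw [hψ, Module.End.one_apply]

theorem one_mem_range_norm_linHom_of_one_mem_coinvariantsKer {p : ℕ} (hp : p.Prime) [CharP k p]
    [Fintype G] (hcard : Nat.card G = p)
    (h : (1 : Module.End k V) ∈ Coinvariants.ker (linHom ρ ρ)) :
    (1 : Module.End k V) ∈ LinearMap.range (linHom ρ ρ).norm := by
  have : Fact p.Prime := ⟨hp⟩
  obtain ⟨g, hg⟩ := (isCyclic_of_prime_card hcard).exists_generator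
  rw [FiniteCyclicGroup.coinvariantsKer_eq_range _ g hg] at h
  obtain ⟨θ, hθ⟩ := h
  have hgθ : linHom ρ ρ g θ = θ + 1 := by
    rw [← hθ]
    simp
  let _ : Algebra (ZMod p) k := ZMod.algebra k p
  let _ : Algebra (ZMod p) (Module.End k V) :=
    Algebra.compHom (Module.End k V) (algebraMap (ZMod p) k)
  let e := zmodMulEquivOfGenerator hg hcard
  have conj_θ (c : ZMod p) :
      linHom ρ ρ (e (Multiplicative.ofAdd c)) θ = θ + algebraMap (ZMod p) (Module.End k V) c := by
    obtain ⟨n, rfl⟩ := ZMod.natCast_zmod_surjective c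
    have hen : e (Multiplicative.ofAdd (n : ZMod p)) = g ^ n := by
      simpa using zmodMulEquivOfGenerator_apply_ofAdd_intCast hg hcard n
    rw [hen, apply_pow_of_apply_eq_add _ hgθ (linHom_one ρ g), map_natCast, nsmul_one]
  refine ⟨-θ ^ (p - 1), ?_⟩
  calc (linHom ρ ρ).norm (-θ ^ (p - 1))
      = -∑ x : G, linHom ρ ρ x θ ^ (p - 1) := by
        simp only [Representation.norm, LinearMap.sum_apply, map_neg, linHom_pow]
    _ = -∑ c : ZMod p, (θ + algebraMap (ZMod p) (Module.End k V) c) ^ (p - 1) := by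
        rw [← (Multiplicative.ofAdd.trans e.toEquiv).sum_comp]
        simp [conj_θ]
    _ = 1 := by
        have := sum_add_algebraMap_pow_card_sub_one (ZMod p) θ
        rw [ZMod.card] at this
        rw [this, neg_neg]

end Representation

section Coevaluation

open Representation

/-- The evaluation `m ⊗ f ↦ (v ↦ f v • m)` from `M ⊗ M^∨` to `End k M`, as a morphism of
representations. -/
def tprodDualToEnd {k G M : Type*} [CommSemiring k] [Group G] [AddCommMonoid M] [Module k M]
    (ρ : Representation k G M) :
    (ρ.tprod ρ.dual).IntertwiningMap (linHom ρ ρ) where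
  toLinearMap := dualTensorHom k M M ∘ₗ (TensorProduct.comm k M (Module.Dual k M)).toLinearMap
  isIntertwining' g := by
    ext
    simp [Module.Dual.transpose_apply]

variable {k M : Type*} [Field k] [AddCommGroup M] [Module k M] [FiniteDimensional k M]

theorem tprodDualToEnd_coevElem {G : Type*} [Group G] (ρ : Representation k G M) :
    tprodDualToEnd ρ (coevElem k M) = 1 := by
  have hcomm : TensorProduct.comm k M (Module.Dual k M) (coevElem k M) =
      (dualTensorHomEquiv k M M).symm LinearMap.id :=
    (TensorProduct.comm k (Module.Dual k M) M).symm_apply_apply _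
  change dualTensorHom k M M (TensorProduct.comm k M (Module.Dual k M) (coevElem k M)) = 1
  rw [hcomm]
  exact (dualTensorHomEquiv k M M).apply_symm_apply LinearMap.id

theorem coevaluation_stably_split_mono_of_not_projective_general {p : ℕ} (hp : p.Prime)
    [CharP k p] {H : Type*} [Group H] (hcard : Nat.card H = p) (ρ : Representation k H M)
    (hproj : ¬ Module.Projective (MonoidAlgebra k H) ρ.asModule) :
    ∃ r : M ⊗[k] Module.Dual k M →ₗ[k] k,
      (∀ g : H, r ∘ₗ (ρ.tprod ρ.dual) g = r) ∧ r ∘ₗ coevMap k M = LinearMap.id := by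
  have : Finite H := Nat.finite_of_card_ne_zero (hcard ▸ hp.ne_zero)
  have := Fintype.ofFinite H
  have hη : coevElem k M ∉ Coinvariants.ker (ρ.tprod ρ.dual) := fun hη =>
    have h1 := tprodDualToEnd_coevElem ρ ▸ map_mem_coinvariantsKer (tprodDualToEnd ρ) hη
    hproj <| projective_of_one_mem_range_norm_linHom ρ <|
      one_mem_range_norm_linHom_of_one_mem_coinvariantsKer ρ hp hcard h1
  obtain ⟨r, hr, hr1⟩ := exists_invariant_functional_eq_one hη
  refine ⟨r, hr, ?_⟩
  ext
  simp [coevMap, hr1]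

end Coevaluation

/-- Let `p` be a prime, `k` a field of characteristic `p` and `H` a cyclic group of order `p`.
Let `M` be a finite-dimensional representation of `H` over `k` which is not projective as a
`kH`-module, and let `η : k → M ⊗ M^∨` be the coevaluation.  Then `η` is a split monomorphism
in the stable module category: there is a morphism of representations `r : M ⊗ M^∨ → k` such
that `id_k - r ∘ η` factors through a projective `kH`-module. -/
theorem coevaluation_stably_split_mono_of_not_projective
    (p : ℕ) (hp : p.Prime) (k : Type u) [Field k] [CharP k p]
    (H : Type u) [Group H] (hcyc : IsCyclic H) (hcard : Nat.card H = p)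
    (M : Type u) [AddCommGroup M] [Module k M] [FiniteDimensional k M]
    (ρ : Representation k H M)
    (hproj : ¬ Module.Projective (MonoidAlgebra k H) ρ.asModule) :
    ∃ r : M ⊗[k] Module.Dual k M →ₗ[k] k,
      (∀ g : H, r ∘ₗ (ρ.tprod ρ.dual) g = r) ∧
      ∃ (P : Type u) (_ : AddCommGroup P) (_ : Module k P) (σ : Representation k H P),
        Module.Projective (MonoidAlgebra k H) σ.asModule ∧
        ∃ (a : k →ₗ[k] P) (b : P →ₗ[k] k),
          (∀ g : H, σ g ∘ₗ a = a) ∧ (∀ g : H, b ∘ₗ σ g = b) ∧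
          b ∘ₗ a = LinearMap.id - r ∘ₗ coevMap k M := by
  obtain ⟨r, hr, hrη⟩ :=
    coevaluation_stably_split_mono_of_not_projective_general hp hcard ρ hproj
  exact ⟨r, hr, PUnit, inferInstance, inferInstance, 1, projective_asModule_of_subsingleton 1,
    0, 0, by simp, by simp, by simp [hrη]⟩
end
end
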